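/- Let N = N₀ ⊕ N₁ be a finite-dimensional complex nilpotent Lie superalgebra of maximal rank such that [N₁,N₁] ⊆ [N₀,N₀]. Then [N₁,N₁] = {0}; that is, N is a Lie algebra (the bracket on the odd part vanishes identically). -/

import Mathlib

/-!
Write `L = even ⊕ odd` for the superalgebra and `L² = [L, L]`.

A maximal torus `T` is simultaneously diagonalizable, compatibly with the parity, so there are
homogeneous joint eigenvectors `e i` of `T` whose classes form a basis of `L / L²`; by nilpotency
they generate `L`. A derivation killing all the `e i` is therefore zero, so sending `d ∈ T` to its
eigenvalues on the `e i` is injective. Since `dim T = dim (L / L²)`, it is bijective, and `T`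
contains a derivation `D` with `D (e i) = 0` for `e i` even and `D (e i) = e i` otherwise
(`exists_parity_derivation`).

Let `G k` be the part of the `k`-eigenspace of `D` having the parity of `k`. The `G k` are
compatible with the bracket and `G 0 ⊔ G 1` contains the generators, so `L = ⨆ k, G k`
(`iSup_layer`). In the eigenvalue `2` part, the hypothesis `[odd, odd] ≤ [even, even]` says
`[G 1, G 1] ≤ [G 2, G 0]`, and `L = G 0 + G 1 + L²` then gives `G 2 ≤ [G 2, G 0]`. By nilpotency
`G 2 = 0`. Hence `G 0 ⊔ G 1` is already a subalgebra, so it is all of `L`; the odd part is `G 1`,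
and `[G 1, G 1] ≤ G 2 = 0` (`odd_bracket_eq_bot_of_derivation`).
-/


open Submodule Module

/-- A Lie superalgebra structure over `ℂ` on the module `L`: a ℤ₂-grading
`L = even ⊕ odd`, together with a grading-preserving bilinear bracket which is
super skew-symmetric and satisfies the super Jacobi identity on homogeneous
elements. -/
structure SuperAlg (L : Type) [AddCommGroup L] [Module ℂ L] : Type where
  bracket : L →ₗ[ℂ] L →ₗ[ℂ] L
  even : Submodule ℂ L
  odd : Submodule ℂ L
  grading_sup : even ⊔ odd = ⊤
  grading_inf : even ⊓ odd = ⊥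
  bk_ee : ∀ x ∈ even, ∀ y ∈ even, bracket x y ∈ even
  bk_eo : ∀ x ∈ even, ∀ y ∈ odd, bracket x y ∈ odd
  bk_oe : ∀ x ∈ odd, ∀ y ∈ even, bracket x y ∈ odd
  bk_oo : ∀ x ∈ odd, ∀ y ∈ odd, bracket x y ∈ even
  skew_e : ∀ x y : L, (x ∈ even ∨ y ∈ even) → bracket x y = - bracket y x
  skew_oo : ∀ x ∈ odd, ∀ y ∈ odd, bracket x y = bracket y x
  jacobi : ∀ (dx dy dz : Bool) (x y z : L),
      x ∈ (if dx then odd else even) → y ∈ (if dy then odd else even) →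
      z ∈ (if dz then odd else even) →
      (if dx && dz then (-1 : ℂ) else 1) • bracket x (bracket y z) +
      (if dx && dy then (-1 : ℂ) else 1) • bracket y (bracket z x) +
      (if dy && dz then (-1 : ℂ) else 1) • bracket z (bracket x y) = 0

namespace SuperAlg

variable {L : Type} [AddCommGroup L] [Module ℂ L] (S : SuperAlg L)

/-- The subspace `[A, B]` spanned by brackets of elements of `A` and `B`. -/
def bk (A B : Submodule ℂ L) : Submodule ℂ L := Submodule.map₂ S.bracket A B

/-- The descending central series of a subalgebra `A`:
`C¹(A) = A`, `C^{k+1}(A) = [C^k(A), A]`. -/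
def lcsIn (A : Submodule ℂ L) : ℕ → Submodule ℂ L
  | 0 => A
  | k + 1 => S.bk (lcsIn A k) A

/-- The derived series of a subalgebra `A`:
`A^{[1]} = A`, `A^{[k+1]} = [A^{[k]}, A^{[k]}]`. -/
def dsIn (A : Submodule ℂ L) : ℕ → Submodule ℂ L
  | 0 => A
  | k + 1 => S.bk (dsIn A k) (dsIn A k)

/-- The square `L² = [L, L]`. -/
def sq : Submodule ℂ L := S.bk ⊤ ⊤

/-- Nilpotency: the descending central series vanishes eventually. -/
def IsNilpotent : Prop := ∃ s, S.lcsIn ⊤ s = ⊥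

/-- Solvability: the derived series vanishes eventually. -/
def IsSolvable : Prop := ∃ k, S.dsIn ⊤ k = ⊥

/-- `A` is an ideal. -/
def IsIdeal (A : Submodule ℂ L) : Prop := S.bk A ⊤ ≤ A

/-- `A` is a graded subspace. -/
def IsGraded (A : Submodule ℂ L) : Prop := (A ⊓ S.even) ⊔ (A ⊓ S.odd) = A

/-- `N` is the nilradical: the greatest nilpotent graded ideal. -/
def IsNilradical (N : Submodule ℂ L) : Prop :=
  (S.IsGraded N ∧ S.IsIdeal N ∧ ∃ s, S.lcsIn N s = ⊥) ∧
  ∀ A : Submodule ℂ L, S.IsGraded A → S.IsIdeal A → (∃ s, S.lcsIn A s = ⊥) → A ≤ N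

/-- `R` is the radical: the greatest solvable graded ideal. -/
def IsRadical (R : Submodule ℂ L) : Prop :=
  (S.IsGraded R ∧ S.IsIdeal R ∧ ∃ k, S.dsIn R k = ⊥) ∧
  ∀ A : Submodule ℂ L, S.IsGraded A → S.IsIdeal A → (∃ k, S.dsIn A k = ⊥) → A ≤ R

/-- `d` is an even superderivation. -/
def IsEvenDer (d : L →ₗ[ℂ] L) : Prop :=
  (∀ x ∈ S.even, d x ∈ S.even) ∧ (∀ x ∈ S.odd, d x ∈ S.odd) ∧
  ∀ x y : L, d (S.bracket x y) = S.bracket (d x) y + S.bracket x (d y)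

/-- `d` is an odd superderivation. -/
def IsOddDer (d : L →ₗ[ℂ] L) : Prop :=
  (∀ x ∈ S.even, d x ∈ S.odd) ∧ (∀ x ∈ S.odd, d x ∈ S.even) ∧
  (∀ x ∈ S.even, ∀ y : L, d (S.bracket x y) = S.bracket (d x) y + S.bracket x (d y)) ∧
  (∀ x ∈ S.odd, ∀ y : L, d (S.bracket x y) = S.bracket (d x) y - S.bracket x (d y))

/-- The inner superderivation `ad a : y ↦ [y, a]`. -/
def ad (a : L) : L →ₗ[ℂ] L := S.bracket.flip a

/-- An endomorphism is diagonalizable if its eigenspaces span. -/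
def IsDiagonalizable (f : Module.End ℂ L) : Prop :=
  (⨆ μ : ℂ, Module.End.eigenspace f μ) = ⊤

/-- A torus on `S`: a commutative subalgebra of the even superderivations
consisting of diagonalizable endomorphisms. -/
def IsTorus (T : Submodule ℂ (L →ₗ[ℂ] L)) : Prop :=
  (∀ d ∈ T, S.IsEvenDer d) ∧
  (∀ d ∈ T, ∀ d' ∈ T, d ∘ₗ d' = d' ∘ₗ d) ∧
  (∀ d ∈ T, IsDiagonalizable d)

/-- A maximal torus. -/
def IsMaxTorus (T : Submodule ℂ (L →ₗ[ℂ] L)) : Prop :=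
  S.IsTorus T ∧ ∀ T' : Submodule ℂ (L →ₗ[ℂ] L), S.IsTorus T' → T ≤ T' → T' = T

/-- A nilpotent Lie superalgebra is of maximal rank if a maximal torus has
dimension `dim (L / L²)`. -/
def IsMaxRank : Prop :=
  ∃ T : Submodule ℂ (L →ₗ[ℂ] L), S.IsMaxTorus T ∧
    Module.finrank ℂ ↥T = Module.finrank ℂ (L ⧸ S.sq)

/-- `ι : N → L` is an embedding of Lie superalgebras (injective, bracket- and
grading-preserving). -/
def IsEmbedding {N : Type} [AddCommGroup N] [Module ℂ N]
    (SN : SuperAlg N) (ι : N →ₗ[ℂ] L) : Prop :=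
  Function.Injective ι ∧
  (∀ x y : N, ι (SN.bracket x y) = S.bracket (ι x) (ι y)) ∧
  SN.even.map ι = S.even ⊓ LinearMap.range ι ∧
  SN.odd.map ι = S.odd ⊓ LinearMap.range ι

/-- `S` (on `L`) is a maximal solvable extension of the nilpotent Lie
superalgebra `SN` (on `N`, embedded via `ι` as the nilradical): `S` is solvable
with nilradical `ι(N)`, and among all such solvable extensions the codimension
of the nilradical is maximal. -/
def IsMaxSolvExt {N : Type} [AddCommGroup N] [Module ℂ N]
    (SN : SuperAlg N) (ι : N →ₗ[ℂ] L) : Prop :=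
  S.IsSolvable ∧ S.IsEmbedding SN ι ∧ S.IsNilradical (LinearMap.range ι) ∧
  ∀ (L' : Type) [AddCommGroup L'] [Module ℂ L'] [FiniteDimensional ℂ L']
    (S' : SuperAlg L') (ι' : N →ₗ[ℂ] L'),
      S'.IsSolvable → S'.IsEmbedding SN ι' → S'.IsNilradical (LinearMap.range ι') →
      Module.finrank ℂ (L' ⧸ LinearMap.range ι') ≤
        Module.finrank ℂ (L ⧸ LinearMap.range ι)

/-- `S` (on `L`) is isomorphic to the semidirect product `R_T = N ⊕ T` of the
nilpotent Lie superalgebra `SN` (embedded via `ι` as the nilradical) with a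
torus `T` of `SN`, the bracket being given by `[x, d] = d x`, `[d, d'] = 0`:
there is an even complement `Q` to `ι(N)` with `[Q, Q] = 0` such that
restriction of the adjoint action to `N` is a linear isomorphism of `Q` onto
`T`. -/
def IsRT {N : Type} [AddCommGroup N] [Module ℂ N]
    (_SN : SuperAlg N) (ι : N →ₗ[ℂ] L) (T : Submodule ℂ (N →ₗ[ℂ] N)) : Prop :=
  ∃ (Q : Submodule ℂ L) (f : ↥Q →ₗ[ℂ] (N →ₗ[ℂ] N)),
    Q ≤ S.even ∧ Q ⊓ LinearMap.range ι = ⊥ ∧ Q ⊔ LinearMap.range ι = ⊤ ∧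
    S.bk Q Q = ⊥ ∧
    (∀ (z : ↥Q) (n : N), ι (f z n) = S.bracket (ι n) (z : L)) ∧
    Function.Injective f ∧
    LinearMap.range f = T

end SuperAlg

namespace SuperAlg

variable {L : Type} [AddCommGroup L] [Module ℂ L] (S : SuperAlg L)

lemma bk_le {A B C : Submodule ℂ L} :
    S.bk A B ≤ C ↔ ∀ a ∈ A, ∀ b ∈ B, S.bracket a b ∈ C := Submodule.map₂_le

lemma mem_bk {A B : Submodule ℂ L} {a b : L} (ha : a ∈ A) (hb : b ∈ B) :
    S.bracket a b ∈ S.bk A B := Submodule.apply_mem_map₂ _ ha hb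

lemma bk_mono {A A' B B' : Submodule ℂ L} (hA : A ≤ A') (hB : B ≤ B') :
    S.bk A B ≤ S.bk A' B' := Submodule.map₂_le_map₂ hA hB

lemma bk_sup_left (A A' B : Submodule ℂ L) :
    S.bk (A ⊔ A') B = S.bk A B ⊔ S.bk A' B := Submodule.map₂_sup_left _ _ _ _

lemma bk_sup_right (A B B' : Submodule ℂ L) :
    S.bk A (B ⊔ B') = S.bk A B ⊔ S.bk A B' := Submodule.map₂_sup_right _ _ _ _

lemma bk_iSup_iSup {ι κ : Type*} (A : ι → Submodule ℂ L) (B : κ → Submodule ℂ L) :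
    S.bk (⨆ i, A i) (⨆ j, B j) = ⨆ i, ⨆ j, S.bk (A i) (B j) := by
  simp only [bk, Submodule.map₂_iSup_left, Submodule.map₂_iSup_right]
  exact iSup_comm

lemma eq_zero_of_even_odd {x : L} (h0 : x ∈ S.even) (h1 : x ∈ S.odd) : x = 0 := by
  have : x ∈ S.even ⊓ S.odd := ⟨h0, h1⟩
  simpa [S.grading_inf] using this

/-- For `A` even, `[A, B]` and `[B, A]` coincide up to signs. -/
lemma bk_comm_le {A B : Submodule ℂ L} (hA : A ≤ S.even) : S.bk A B ≤ S.bk B A := by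
  rw [bk_le]
  intro a ha b hb
  rw [S.skew_e a b (Or.inl (hA ha))]
  exact neg_mem (S.mem_bk hb ha)

/-! ### Generation of a nilpotent superalgebra -/

/-- The terms of the descending central series are graded. -/
lemma lcs_graded (k : ℕ) :
    S.lcsIn ⊤ k ≤ (S.lcsIn ⊤ k ⊓ S.even) ⊔ (S.lcsIn ⊤ k ⊓ S.odd) := by
  induction k with
  | zero => simp [lcsIn, S.grading_sup]
  | succ k ih =>
    have key : S.lcsIn ⊤ (k + 1) ≤
        S.bk ((S.lcsIn ⊤ k ⊓ S.even) ⊔ (S.lcsIn ⊤ k ⊓ S.odd)) (S.even ⊔ S.odd) :=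
      S.bk_mono ih S.grading_sup.ge
    refine key.trans ?_
    rw [bk_sup_left, bk_sup_right, bk_sup_right]
    refine sup_le (sup_le ?_ ?_) (sup_le ?_ ?_)
    · exact le_sup_of_le_left (S.bk_le.2 fun a ha b hb =>
        ⟨S.mem_bk ha.1 trivial, S.bk_ee a ha.2 b hb⟩)
    · exact le_sup_of_le_right (S.bk_le.2 fun a ha b hb =>
        ⟨S.mem_bk ha.1 trivial, S.bk_eo a ha.2 b hb⟩)
    · exact le_sup_of_le_right (S.bk_le.2 fun a ha b hb =>
        ⟨S.mem_bk ha.1 trivial, S.bk_oe a ha.2 b hb⟩)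
    · exact le_sup_of_le_left (S.bk_le.2 fun a ha b hb =>
        ⟨S.mem_bk ha.1 trivial, S.bk_oo a ha.2 b hb⟩)

/-- Bracketing on the left also lowers the descending central series: gradedness of its terms
makes super skew-symmetry applicable. -/
lemma bk_top_lcs_le (k : ℕ) : S.bk ⊤ (S.lcsIn ⊤ k) ≤ S.lcsIn ⊤ (k + 1) := by
  have key : S.bk ⊤ (S.lcsIn ⊤ k) ≤
      S.bk (S.even ⊔ S.odd) ((S.lcsIn ⊤ k ⊓ S.even) ⊔ (S.lcsIn ⊤ k ⊓ S.odd)) :=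
    S.bk_mono S.grading_sup.ge (S.lcs_graded k)
  refine key.trans ?_
  rw [bk_sup_left, bk_sup_right, bk_sup_right]
  refine sup_le (sup_le ?_ ?_) (sup_le ?_ ?_) <;> rw [bk_le] <;> intro a ha b hb
  · rw [S.skew_e a b (Or.inl ha)]
    exact neg_mem (S.mem_bk hb.1 trivial)
  · rw [S.skew_e a b (Or.inl ha)]
    exact neg_mem (S.mem_bk hb.1 trivial)
  · rw [S.skew_e a b (Or.inr hb.2)]
    exact neg_mem (S.mem_bk hb.1 trivial)
  · rw [S.skew_oo a ha b hb.2]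
    exact S.mem_bk hb.1 trivial

/-- A subalgebra of a nilpotent Lie superalgebra which spans modulo `L²` is everything: by
induction it spans modulo every term of the descending central series. -/
lemma eq_top_of_sup_sq (hnil : S.IsNilpotent) {M : Submodule ℂ L} (hM : S.bk M M ≤ M)
    (hsq : M ⊔ S.sq = ⊤) : M = ⊤ := by
  obtain ⟨s, hs⟩ := hnil
  have key : ∀ k, M ⊔ S.lcsIn ⊤ k = ⊤ := by
    intro k
    induction k with
    | zero => simp [lcsIn]
    | succ k ih =>
      refine eq_top_iff.2 (hsq.ge.trans (sup_le le_sup_left ?_))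
      have : S.sq ≤ S.bk (M ⊔ S.lcsIn ⊤ k) (M ⊔ S.lcsIn ⊤ k) := S.bk_mono ih.ge ih.ge
      refine this.trans ?_
      rw [bk_sup_left, bk_sup_right]
      refine sup_le (sup_le (le_sup_of_le_left hM) (le_sup_of_le_right ?_))
        (le_sup_of_le_right (S.bk_mono le_rfl le_top))
      exact (S.bk_mono le_top le_rfl).trans (S.bk_top_lcs_le k)
  simpa [hs] using key s

/-- Nakayama-type consequence of nilpotency. -/
lemma eq_bot_of_le_bk (hnil : S.IsNilpotent) {A B : Submodule ℂ L} (h : A ≤ S.bk A B) :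
    A = ⊥ := by
  obtain ⟨s, hs⟩ := hnil
  have key : ∀ k, A ≤ S.lcsIn ⊤ k := by
    intro k
    induction k with
    | zero => exact le_top
    | succ k ih => exact h.trans (S.bk_mono ih le_top)
  exact eq_bot_iff.2 (hs ▸ key s)

/-! ### The grading defined by a parity derivation -/

/-- The `k`-th layer of an endomorphism `D`: the elements of its eigenspace for the eigenvalue `k`
which have the parity of `k`. -/
def layer (D : L →ₗ[ℂ] L) (k : ℕ) : Submodule ℂ L :=
  Module.End.eigenspace D (k : ℂ) ⊓ (if Even k then S.even else S.odd)

lemma bk_layer_le {D : L →ₗ[ℂ] L} (hD : S.IsEvenDer D) (i j : ℕ) :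
    S.bk (S.layer D i) (S.layer D j) ≤ S.layer D (i + j) := by
  rw [bk_le]
  rintro a ⟨ha, ha'⟩ b ⟨hb, hb'⟩
  refine ⟨?_, ?_⟩
  · simp only [SetLike.mem_coe, Module.End.mem_eigenspace_iff] at ha hb ⊢
    rw [hD.2.2, ha, hb, map_smul, LinearMap.smul_apply, map_smul, ← add_smul]
    push_cast
    rfl
  · simp only [SetLike.mem_coe] at ha' hb' ⊢
    by_cases hi : Even i <;> by_cases hj : Even j <;>
      simp only [hi, hj, if_true, if_false, Nat.even_add] at ha' hb' ⊢
    · simpa using S.bk_ee a ha' b hb'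
    · simpa using S.bk_eo a ha' b hb'
    · simpa using S.bk_oe a ha' b hb'
    · simpa using S.bk_oo a ha' b hb'

lemma layer_even_le (D : L →ₗ[ℂ] L) (k : ℕ) : S.layer D (2 * k) ≤ S.even := by
  intro x hx
  simpa using hx.2

lemma layer_odd_le (D : L →ₗ[ℂ] L) (k : ℕ) : S.layer D (2 * k + 1) ≤ S.odd := by
  intro x hx
  simpa [Nat.even_add_one] using hx.2

lemma iSup_layer (hnil : S.IsNilpotent) {D : L →ₗ[ℂ] L} (hD : S.IsEvenDer D)
    (hgen : S.layer D 0 ⊔ S.layer D 1 ⊔ S.sq = ⊤) : ⨆ k, S.layer D k = ⊤ := by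
  refine S.eq_top_of_sup_sq hnil ?_ ?_
  · rw [bk_iSup_iSup]
    exact iSup_le fun i => iSup_le fun j =>
      (S.bk_layer_le hD i j).trans (le_iSup (S.layer D) (i + j))
  · exact eq_top_iff.2 (hgen.ge.trans (sup_le_sup_right
      (sup_le (le_iSup (S.layer D) 0) (le_iSup (S.layer D) 1)) _))

/-- If `P ≤ even` and `Q ≤ odd` span `L`, then `P` is the whole even part and `Q` the whole
odd part. -/
lemma parts_le_of_sup_eq_top {P Q : Submodule ℂ L} (hP : P ≤ S.even) (hQ : Q ≤ S.odd)
    (h : P ⊔ Q = ⊤) : S.even ≤ P ∧ S.odd ≤ Q := by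
  constructor
  · calc S.even = (P ⊔ Q) ⊓ S.even := by rw [h, top_inf_eq]
      _ = P ⊔ (Q ⊓ S.even) := sup_inf_assoc_of_le Q hP
      _ ≤ P ⊔ (S.odd ⊓ S.even) := sup_le_sup_left (inf_le_inf_right _ hQ) _
      _ = P := by rw [inf_comm, S.grading_inf, sup_bot_eq]
  · calc S.odd = (Q ⊔ P) ⊓ S.odd := by rw [sup_comm, h, top_inf_eq]
      _ = Q ⊔ (P ⊓ S.odd) := sup_inf_assoc_of_le P hQ
      _ ≤ Q ⊔ (S.even ⊓ S.odd) := sup_le_sup_left (inf_le_inf_right _ hP) _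
      _ = Q := by rw [S.grading_inf, sup_bot_eq]

/-- The sum of the eigenspaces of `D` for eigenvalues other than `2`. -/
def offTwo (D : L →ₗ[ℂ] L) : Submodule ℂ L :=
  ⨆ (μ : ℂ) (_ : μ ≠ 2), Module.End.eigenspace D μ

lemma layer_le_offTwo (D : L →ₗ[ℂ] L) {k : ℕ} (hk : k ≠ 2) : S.layer D k ≤ offTwo D :=
  inf_le_left.trans (le_iSup₂_of_le (k : ℂ) (by exact_mod_cast hk) le_rfl)

/-- Extraction of the eigenvalue `2` component. -/
lemma le_of_le_sup_offTwo {D : L →ₗ[ℂ] L} {A B : Submodule ℂ L}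
    (hA : A ≤ S.layer D 2) (hB : B ≤ S.layer D 2) (h : B ≤ A ⊔ offTwo D) : B ≤ A := by
  have hdisj : Disjoint (Module.End.eigenspace D (2 : ℂ)) (offTwo D) :=
    Module.End.eigenspaces_iSupIndep D (2 : ℂ)
  have h2 : S.layer D 2 ≤ Module.End.eigenspace D (2 : ℂ) := by
    simp [layer]
  calc B ≤ (A ⊔ offTwo D) ⊓ Module.End.eigenspace D (2 : ℂ) := le_inf h (hB.trans h2)
    _ = A ⊔ (offTwo D ⊓ Module.End.eigenspace D (2 : ℂ)) :=
        sup_inf_assoc_of_le _ (hA.trans h2)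
    _ = A := by rw [inf_comm, hdisj.eq_bot, sup_bot_eq]

/-- The conclusion, given an even derivation `D` such that `L` is spanned modulo `L²` by even
elements killed by `D` and odd elements fixed by `D`. -/
lemma odd_bracket_eq_bot_of_derivation (hnil : S.IsNilpotent) {D : L →ₗ[ℂ] L}
    (hD : S.IsEvenDer D) (hgen : S.layer D 0 ⊔ S.layer D 1 ⊔ S.sq = ⊤)
    (h : S.bk S.odd S.odd ≤ S.bk S.even S.even) : S.bk S.odd S.odd = ⊥ := by
  have htop := S.iSup_layer hnil hD hgen
  have hsplit : (⨆ k, S.layer D (2 * k)) ⊔ (⨆ k, S.layer D (2 * k + 1)) = ⊤ := by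
    refine eq_top_iff.2 (htop.ge.trans (iSup_le fun k => ?_))
    rcases Nat.even_or_odd' k with ⟨m, rfl | rfl⟩
    · exact le_sup_of_le_left (le_iSup (fun k => S.layer D (2 * k)) m)
    · exact le_sup_of_le_right (le_iSup (fun k => S.layer D (2 * k + 1)) m)
  have heven := (S.parts_le_of_sup_eq_top (iSup_le (S.layer_even_le D))
    (iSup_le (S.layer_odd_le D)) hsplit).1
  set A := S.bk (S.layer D 2) (S.layer D 0) with hAdef
  have hA : A ≤ S.layer D 2 := S.bk_layer_le hD 2 0
  have h11 : S.bk (S.layer D 1) (S.layer D 1) ≤ S.layer D 2 := S.bk_layer_le hD 1 1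
  have h02 : S.bk (S.layer D 0) (S.layer D 2) ≤ A :=
    S.bk_comm_le (S.layer_even_le D 0)
  -- An even-even bracket of total eigenvalue `2` comes from the layers `0` and `2`.
  have hee : S.bk S.even S.even ≤ A ⊔ offTwo D := by
    refine (S.bk_mono heven heven).trans ?_
    rw [bk_iSup_iSup]
    refine iSup_le fun i => iSup_le fun j => ?_
    by_cases hij : 2 * i + 2 * j = 2
    · obtain ⟨rfl, rfl⟩ | ⟨rfl, rfl⟩ : (i = 0 ∧ j = 1) ∨ (i = 1 ∧ j = 0) := by omega
      · exact le_sup_of_le_left h02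
      · exact le_sup_of_le_left le_rfl
    · exact le_sup_of_le_right ((S.bk_layer_le hD _ _).trans (S.layer_le_offTwo D hij))
  have h11A : S.bk (S.layer D 1) (S.layer D 1) ≤ A := by
    refine S.le_of_le_sup_offTwo hA h11 (le_trans ?_ (h.trans hee))
    exact S.bk_mono (S.layer_odd_le D 0) (S.layer_odd_le D 0)
  have hsq : S.sq ≤ A ⊔ offTwo D := by
    have : S.sq ≤ S.bk (⨆ k, S.layer D k) (⨆ k, S.layer D k) := S.bk_mono htop.ge htop.ge
    refine this.trans ?_
    rw [bk_iSup_iSup]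
    refine iSup_le fun i => iSup_le fun j => ?_
    by_cases hij : i + j = 2
    · obtain ⟨rfl, rfl⟩ | ⟨rfl, rfl⟩ | ⟨rfl, rfl⟩ :
          (i = 0 ∧ j = 2) ∨ (i = 1 ∧ j = 1) ∨ (i = 2 ∧ j = 0) := by omega
      · exact le_sup_of_le_left h02
      · exact le_sup_of_le_left h11A
      · exact le_sup_of_le_left le_rfl
    · exact le_sup_of_le_right ((S.bk_layer_le hD _ _).trans (S.layer_le_offTwo D hij))
  have hall : (⊤ : Submodule ℂ L) ≤ A ⊔ offTwo D := by
    refine hgen.ge.trans (sup_le (sup_le ?_ ?_) hsq)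
    · exact le_sup_of_le_right (S.layer_le_offTwo D (by norm_num))
    · exact le_sup_of_le_right (S.layer_le_offTwo D (by norm_num))
  have h2 : S.layer D 2 = ⊥ :=
    S.eq_bot_of_le_bk hnil (S.le_of_le_sup_offTwo hA le_rfl (le_top.trans hall))
  have h01 : S.layer D 0 ⊔ S.layer D 1 = ⊤ := by
    refine S.eq_top_of_sup_sq hnil ?_ hgen
    rw [bk_sup_left, bk_sup_right, bk_sup_right]
    refine sup_le (sup_le ?_ ?_) (sup_le ?_ ?_)
    · exact le_sup_of_le_left (S.bk_layer_le hD 0 0)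
    · exact le_sup_of_le_right (S.bk_layer_le hD 0 1)
    · exact le_sup_of_le_right (S.bk_layer_le hD 1 0)
    · exact (h11.trans h2.le).trans bot_le
  have hodd := (S.parts_le_of_sup_eq_top (S.layer_even_le D 0) (S.layer_odd_le D 0) h01).2
  exact eq_bot_iff.2 ((S.bk_mono hodd hodd).trans (h11.trans h2.le))

/-! ### The parity derivation of a torus of maximal rank -/

/-- A diagonalizable endomorphism has no proper generalized eigenvectors. -/
lemma IsDiagonalizable.maxGenEigenspace_le {f : Module.End ℂ L} (hf : IsDiagonalizable f)
    (μ : ℂ) : f.maxGenEigenspace μ ≤ f.eigenspace μ := by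
  have hle : ∀ ν, f.eigenspace ν ≤ f.maxGenEigenspace ν := fun ν =>
    (f.genEigenspace ν).monotone le_top
  have hdisj : Disjoint (f.maxGenEigenspace μ) (⨆ (ν : ℂ) (_ : ν ≠ μ), f.maxGenEigenspace ν) :=
    f.independent_maxGenEigenspace μ
  have htop : f.eigenspace μ ⊔ (⨆ (ν : ℂ) (_ : ν ≠ μ), f.maxGenEigenspace ν) = ⊤ := by
    refine eq_top_iff.2 (hf.ge.trans (iSup_le fun ν => ?_))
    by_cases h : ν = μ
    · exact h ▸ le_sup_left
    · exact le_sup_of_le_right (le_iSup₂_of_le ν h (hle ν))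
  calc f.maxGenEigenspace μ
      = (f.eigenspace μ ⊔ (⨆ (ν : ℂ) (_ : ν ≠ μ), f.maxGenEigenspace ν)) ⊓
          f.maxGenEigenspace μ := by rw [htop, top_inf_eq]
    _ = f.eigenspace μ ⊔ ((⨆ (ν : ℂ) (_ : ν ≠ μ), f.maxGenEigenspace ν) ⊓
          f.maxGenEigenspace μ) := sup_inf_assoc_of_le _ (hle μ)
    _ ≤ f.eigenspace μ := by rw [inf_comm, hdisj.eq_bot, sup_bot_eq]

/-- The homogeneous joint eigenvectors of `T`. -/
def homogEigen (T : Submodule ℂ (L →ₗ[ℂ] L)) : Set L :=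
  {x | (x ∈ S.even ∨ x ∈ S.odd) ∧ ∀ d ∈ T, ∃ c : ℂ, d x = c • x}

lemma span_homogEigen [FiniteDimensional ℂ L] {T : Submodule ℂ (L →ₗ[ℂ] L)}
    (hT : S.IsTorus T) : Submodule.span ℂ (S.homogEigen T) = ⊤ := by
  have hjoint := Module.End.iSup_iInf_maxGenEigenspace_eq_top_of_iSup_maxGenEigenspace_eq_top_of_commute
    (fun d : T => (d : Module.End ℂ L)) (fun d d' _ => hT.2.1 d d.2 d' d'.2) (fun d => by
      refine eq_top_iff.2 ((hT.2.2 d d.2).ge.trans (iSup_mono fun ν => ?_))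
      exact (Module.End.genEigenspace (d : Module.End ℂ L) ν).monotone le_top)
  refine eq_top_iff.2 (hjoint.ge.trans (iSup_le fun χ => ?_))
  intro x hx
  have hx' : ∀ d : T, (d : L →ₗ[ℂ] L) x = χ d • x := fun d =>
    Module.End.mem_eigenspace_iff.1
      (IsDiagonalizable.maxGenEigenspace_le (hT.2.2 d d.2) _ ((Submodule.mem_iInf _).1 hx d))
  obtain ⟨x0, h0, x1, h1, rfl⟩ : ∃ x0 ∈ S.even, ∃ x1 ∈ S.odd, x0 + x1 = x :=
    Submodule.mem_sup.1 (by rw [S.grading_sup]; trivial)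
  -- Both homogeneous components of a joint eigenvector are joint eigenvectors.
  have hcomp : ∀ d : T, (d : L →ₗ[ℂ] L) x0 = χ d • x0 ∧ (d : L →ₗ[ℂ] L) x1 = χ d • x1 := by
    intro d
    have hd := hT.1 d d.2
    have e := hx' d
    rw [map_add, smul_add] at e
    have e' : (d : L →ₗ[ℂ] L) x0 - χ d • x0 = χ d • x1 - (d : L →ₗ[ℂ] L) x1 := by
      rw [sub_eq_sub_iff_add_eq_add, e, add_comm]
    have hz : (d : L →ₗ[ℂ] L) x0 - χ d • x0 = 0 := by
      refine S.eq_zero_of_even_odd (sub_mem (hd.1 _ h0) (S.even.smul_mem _ h0)) ?_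
      rw [e']
      exact sub_mem (S.odd.smul_mem _ h1) (hd.2.1 _ h1)
    exact ⟨sub_eq_zero.1 hz, (sub_eq_zero.1 (e' ▸ hz)).symm⟩
  refine add_mem (Submodule.subset_span ⟨Or.inl h0, fun d hd => ⟨χ ⟨d, hd⟩, ?_⟩⟩)
    (Submodule.subset_span ⟨Or.inr h1, fun d hd => ⟨χ ⟨d, hd⟩, ?_⟩⟩)
  · exact (hcomp ⟨d, hd⟩).1
  · exact (hcomp ⟨d, hd⟩).2

/-- If a torus has dimension `dim (L / L²)`, there is an even derivation (found in the torus) for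
which even elements it kills and odd elements it fixes span `L` modulo `L²`. -/
lemma exists_parity_derivation [FiniteDimensional ℂ L] (hnil : S.IsNilpotent)
    {T : Submodule ℂ (L →ₗ[ℂ] L)} (hT : S.IsTorus T)
    (hrank : Module.finrank ℂ T = Module.finrank ℂ (L ⧸ S.sq)) :
    ∃ D, S.IsEvenDer D ∧ S.layer D 0 ⊔ S.layer D 1 ⊔ S.sq = ⊤ := by
  classical
  have hspan : ⊤ ≤ Submodule.span ℂ (S.sq.mkQ '' S.homogEigen T) := by
    rw [Submodule.span_image, S.span_homogEigen hT, Submodule.map_top, Submodule.range_mkQ]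
  set b := Module.Basis.ofSpan hspan with hb
  have hbmem : ∀ i, ∃ x ∈ S.homogEigen T, S.sq.mkQ x = b i := fun i =>
    Module.Basis.ofSpan_subset hspan ⟨i, rfl⟩
  choose e he heb using hbmem
  have : Fintype _ := FiniteDimensional.fintypeBasisIndex b
  have hgen : Submodule.span ℂ (Set.range e) ⊔ S.sq = ⊤ := by
    have hmap : (Submodule.span ℂ (Set.range e)).map S.sq.mkQ = ⊤ := by
      rw [Submodule.map_span, ← Set.range_comp, ← b.span_eq]
      congr 2
      exact funext heb
    have := Submodule.comap_map_eq S.sq.mkQ (Submodule.span ℂ (Set.range e))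
    rwa [hmap, Submodule.comap_top, Submodule.ker_mkQ, eq_comm] at this
  -- The eigenvalues of `d` on the `e i`, written so as to be visibly linear in `d`.
  let Φ : T →ₗ[ℂ] (_ → ℂ) := LinearMap.pi fun i =>
    (b.coord i ∘ₗ S.sq.mkQ) ∘ₗ (LinearMap.applyₗ (e i)) ∘ₗ T.subtype
  have hΦ : ∀ (d : T) i, (d : L →ₗ[ℂ] L) (e i) = Φ d i • e i := by
    intro d i
    obtain ⟨c, hc⟩ := (he i).2 d d.2
    have : Φ d i = b.coord i (S.sq.mkQ ((d : L →ₗ[ℂ] L) (e i))) := rfl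
    rw [this, hc, map_smul, heb, map_smul]
    simp
  have hinj : Function.Injective Φ := by
    rw [← LinearMap.ker_eq_bot, LinearMap.ker_eq_bot']
    intro d hd
    have hker : LinearMap.ker (d : L →ₗ[ℂ] L) = ⊤ := by
      refine S.eq_top_of_sup_sq hnil ?_ ?_
      · rw [bk_le]
        intro x hx y hy
        rw [LinearMap.mem_ker] at hx hy ⊢
        rw [(hT.1 d d.2).2.2, hx, hy]
        simp
      · refine eq_top_iff.2 (hgen.ge.trans (sup_le_sup_right (Submodule.span_le.2 ?_) _))
        rintro _ ⟨i, rfl⟩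
        simp [hΦ, hd]
    exact Subtype.ext (LinearMap.ker_eq_top.1 hker)
  have hsurj : Function.Surjective Φ := by
    refine (LinearMap.injective_iff_surjective_of_finrank_eq_finrank ?_).1 hinj
    rw [hrank, Module.finrank_eq_card_basis b, Module.finrank_fintype_fun_eq_card]
  obtain ⟨D, hDp⟩ := hsurj fun i => if e i ∈ S.even then 0 else 1
  refine ⟨D, hT.1 D D.2, ?_⟩
  refine eq_top_iff.2 (hgen.ge.trans (sup_le_sup_right (Submodule.span_le.2 ?_) _))
  rintro _ ⟨i, rfl⟩
  have hi := hΦ D i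
  rw [hDp] at hi
  by_cases hpar : e i ∈ S.even
  · refine Submodule.mem_sup_left ⟨?_, by simpa using hpar⟩
    simpa [hpar, Module.End.mem_eigenspace_iff] using hi
  · refine Submodule.mem_sup_right ⟨?_, by simpa using (he i).1.resolve_left hpar⟩
    simpa [hpar, Module.End.mem_eigenspace_iff] using hi

end SuperAlg

/-- A finite-dimensional complex nilpotent Lie superalgebra
`N = N₀ ⊕ N₁` of maximal rank with `[N₁,N₁] ⊆ [N₀,N₀]` satisfies `[N₁,N₁] = 0`,
i.e. `N` is a Lie algebra. -/
theorem maxRank_odd_bracket_trivial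
    {L : Type} [AddCommGroup L] [Module ℂ L] [FiniteDimensional ℂ L] (S : SuperAlg L)
    (hnil : S.IsNilpotent) (hmax : S.IsMaxRank)
    (h : S.bk S.odd S.odd ≤ S.bk S.even S.even) :
    S.bk S.odd S.odd = ⊥ := by
  obtain ⟨T, hT, hrank⟩ := hmax
  obtain ⟨D, hD, hgen⟩ := S.exists_parity_derivation hnil hT.1 hrank
  exact S.odd_bracket_eq_bot_of_derivation hnil hD hgen h
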